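/- arXiv:2205.04965 — 9 statements merged into one kernel-verified Lean document; each statement's English description precedes it below -/
import Mathlib

section
/- For pure unit quaternions p, q, the set F := { x ∈ ℍ : p * x = x * q } is a 2-dimensional ℝ-linear subspace of ℍ, and K_p^q = { x ∈ F : ‖x‖ = 1 }; in particular K_p^q is nonempty (it is a great circle of S³). Conversely, for every 2-dimensional ℝ-linear subspace W of ℍ there exist pure unit quaternions p, q such that { x ∈ W : ‖x‖ = 1 } = K_p^q. -/
open Quaternion

/-- The great circle `K_p^q`: the set of unit quaternions `x` with
`(conj x) * p * x = q`. -/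
def K (p q : Quaternion ℝ) : Set (Quaternion ℝ) :=
  {x : Quaternion ℝ | ‖x‖ = 1 ∧ star x * p * x = q}

/-- The subspace of solutions of `p * x = x * q`. -/
def solF (p q : Quaternion ℝ) : Submodule ℝ (Quaternion ℝ) where
  carrier := {x | p * x = x * q}
  add_mem' := by
    intro a b ha hb
    simp only [Set.mem_ofPred_eq] at *
    rw [mul_add, add_mul, ha, hb]
  zero_mem' := by simp
  smul_mem' := by
    intro c x hx
    simp only [Set.mem_ofPred_eq] at *
    rw [mul_smul_comm, smul_mul_assoc, hx]

lemma mem_solF {p q x : Quaternion ℝ} : x ∈ solF p q ↔ p * x = x * q := Iff.rfl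

lemma star_mul_one {x : Quaternion ℝ} (h : ‖x‖ = 1) : star x * x = 1 := by
  rw [Quaternion.star_mul_self, Quaternion.normSq_eq_norm_mul_self, h]; simp

lemma mul_star_one {x : Quaternion ℝ} (h : ‖x‖ = 1) : x * star x = 1 := by
  rw [Quaternion.self_mul_star, Quaternion.normSq_eq_norm_mul_self, h]; simp

lemma pure_sq {p : Quaternion ℝ} (h0 : p.re = 0) (h : ‖p‖ = 1) : p * p = -1 := by
  have h1 := mul_star_one h
  have h2 : star p = -p := by rw [Quaternion.star_eq_neg]; exact h0
  rw [h2, mul_neg] at h1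
  rw [← h1, neg_neg]

lemma K_eq (p q : Quaternion ℝ) : K p q = {x : Quaternion ℝ | x ∈ solF p q ∧ ‖x‖ = 1} := by
  ext x
  simp only [K, Set.mem_ofPred_eq, mem_solF]
  constructor
  · rintro ⟨h, h2⟩
    refine ⟨?_, h⟩
    rw [← h2, ← mul_assoc, ← mul_assoc, mul_star_one h, one_mul]
  · rintro ⟨h2, h⟩
    refine ⟨h, ?_⟩
    rw [mul_assoc, h2, ← mul_assoc, star_mul_one h, one_mul]

lemma exists_solF_ne {p q : Quaternion ℝ} (hp0 : p.re = 0) (hp : ‖p‖ = 1) (hq0 : q.re = 0)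
    (hq : ‖q‖ = 1) : ∃ u ∈ solF p q, u ≠ 0 := by
  have hpp := pure_sq hp0 hp
  have hqq := pure_sq hq0 hq
  by_contra! hc
  have key : ∀ x : Quaternion ℝ, x * q = - (p * x) := by
    intro x
    have hm : x - p * x * q ∈ solF p q := by
      rw [mem_solF, mul_sub, sub_mul, mul_assoc (p * x), hqq, mul_assoc p x q, ← mul_assoc p p,
        hpp]
      simp [add_comm]
    have h1 := hc _ hm
    have h2 : p * (x - p * x * q) = 0 := by rw [h1, mul_zero]
    rw [mul_sub, mul_assoc p x q, ← mul_assoc p p, hpp] at h2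
    rw [eq_neg_iff_add_eq_zero, add_comm]
    simpa using h2
  have k1 := key 1
  rw [one_mul, mul_one] at k1
  obtain ⟨i, i0, i1, i2, i3⟩ : ∃ i : Quaternion ℝ, i.re = 0 ∧ i.imI = 1 ∧ i.imJ = 0 ∧ i.imK = 0 :=
    ⟨⟨0, 1, 0, 0⟩, rfl, rfl, rfl, rfl⟩
  obtain ⟨j, j0, j1, j2, j3⟩ : ∃ j : Quaternion ℝ, j.re = 0 ∧ j.imI = 0 ∧ j.imJ = 1 ∧ j.imK = 0 :=
    ⟨⟨0, 0, 1, 0⟩, rfl, rfl, rfl, rfl⟩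
  have hi := key i
  have hj := key j
  rw [k1] at hi hj
  have : p = 0 := by
    simp only [Quaternion.ext_iff, Quaternion.re_mul, Quaternion.imI_mul, Quaternion.imJ_mul,
      Quaternion.imK_mul, Quaternion.re_neg, Quaternion.imI_neg, Quaternion.imJ_neg,
      Quaternion.imK_neg, i0, i1, i2, i3, j0, j1, j2, j3] at hi hj
    ext
    · exact hp0
    all_goals simp
    all_goals linarith [hi.1, hi.2.1, hi.2.2.1, hi.2.2.2, hj.1, hj.2.1, hj.2.2.1, hj.2.2.2]
  rw [this] at hp
  simp at hp

lemma comm_form {q y : Quaternion ℝ} (hq0 : q.re = 0) (hq : ‖q‖ = 1) (h : q * y = y * q) :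
    ∃ a b : ℝ, y = a • 1 + b • q := by
  have hn : q.imI ^ 2 + q.imJ ^ 2 + q.imK ^ 2 = 1 := by
    have := Quaternion.normSq_eq_norm_mul_self q
    rw [hq, Quaternion.normSq_def'] at this
    rw [hq0] at this
    linarith
  refine ⟨y.re, y.imI * q.imI + y.imJ * q.imJ + y.imK * q.imK, ?_⟩
  simp only [Quaternion.ext_iff, Quaternion.re_mul, Quaternion.imI_mul, Quaternion.imJ_mul,
      Quaternion.imK_mul] at h
  obtain ⟨-, h1, h2, h3⟩ := h
  have e1 : q.imJ * y.imK = q.imK * y.imJ := by linarith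
  have e2 : q.imK * y.imI = q.imI * y.imK := by linarith
  have e3 : q.imI * y.imJ = q.imJ * y.imI := by linarith
  ext
  · simp [hq0]
  · simp
    linear_combination (-y.imI) * hn - q.imJ * e3 + q.imK * e2
  · simp
    linear_combination (-y.imJ) * hn - q.imK * e1 + q.imI * e3
  · simp
    linear_combination (-y.imK) * hn - q.imI * e2 + q.imJ * e1

lemma finrank_solF {p q : Quaternion ℝ} (hp0 : p.re = 0) (hp : ‖p‖ = 1) (hq0 : q.re = 0)
    (hq : ‖q‖ = 1) : Module.finrank ℝ (solF p q) = 2 := by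
  obtain ⟨u, hu, hu0⟩ := exists_solF_ne hp0 hp hq0 hq
  rw [mem_solF] at hu
  have hli : LinearIndependent ℝ ![u, u * q] := by
    rw [LinearIndependent.pair_iff]
    intro s t h
    have h1 : u * (s • 1 + t • q) = 0 := by
      rw [mul_add, mul_smul_comm, mul_smul_comm, mul_one, h]
    have h2 := (mul_eq_zero.1 h1).resolve_left hu0
    have hs : s = 0 := by
      have := congrArg (fun x : Quaternion ℝ => x.re) h2
      simpa [hq0] using this
    refine ⟨hs, ?_⟩
    rw [hs, zero_smul, zero_add] at h2
    refine (smul_eq_zero.1 h2).resolve_right ?_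
    rintro rfl
    simp at hq
  have hs : solF p q = Submodule.span ℝ (Set.range ![u, u * q]) := by
    apply le_antisymm
    · intro x hx
      rw [mem_solF] at hx
      have hy : q * (u⁻¹ * x) = (u⁻¹ * x) * q := by
        apply mul_left_cancel₀ hu0
        rw [← mul_assoc, ← hu, mul_assoc p, ← mul_assoc u, ← mul_assoc u, ← mul_assoc u, mul_inv_cancel₀ hu0,
          one_mul, hx]
      obtain ⟨a, b, hab⟩ := comm_form hq0 hq hy
      have : x = a • u + b • (u * q) := by
        have h3 : u * (u⁻¹ * x) = x := by rw [← mul_assoc, mul_inv_cancel₀ hu0, one_mul]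
        rw [← h3, hab, mul_add, mul_smul_comm, mul_smul_comm, mul_one]
      rw [this]
      refine Submodule.add_mem _ (Submodule.smul_mem _ _ (Submodule.subset_span ⟨0, rfl⟩))
        (Submodule.smul_mem _ _ (Submodule.subset_span ⟨1, rfl⟩))
    · rw [Submodule.span_le]
      rintro _ ⟨i, rfl⟩
      fin_cases i
      · exact hu
      · change p * (u * q) = u * q * q
        rw [← mul_assoc, hu]
  rw [hs, finrank_span_eq_card hli]
  simp

theorem statement1 :
    (∀ p q : Quaternion ℝ, p.re = 0 → ‖p‖ = 1 → q.re = 0 → ‖q‖ = 1 →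
      ∃ F : Submodule ℝ (Quaternion ℝ),
        (F : Set (Quaternion ℝ)) = {x : Quaternion ℝ | p * x = x * q} ∧
        Module.finrank ℝ F = 2 ∧
        K p q = {x : Quaternion ℝ | x ∈ F ∧ ‖x‖ = 1} ∧
        (K p q).Nonempty) ∧
    (∀ W : Submodule ℝ (Quaternion ℝ), Module.finrank ℝ W = 2 →
      ∃ p q : Quaternion ℝ, p.re = 0 ∧ ‖p‖ = 1 ∧ q.re = 0 ∧ ‖q‖ = 1 ∧
        {x : Quaternion ℝ | x ∈ W ∧ ‖x‖ = 1} = K p q) := by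
  constructor
  · intro p q hp0 hp hq0 hq
    refine ⟨solF p q, rfl, finrank_solF hp0 hp hq0 hq, K_eq p q, ?_⟩
    obtain ⟨u, hu, hu0⟩ := exists_solF_ne hp0 hp hq0 hq
    rw [K_eq]
    refine ⟨(‖u‖⁻¹ : ℝ) • u, Submodule.smul_mem _ _ hu, ?_⟩
    rw [norm_smul, norm_inv, norm_norm, inv_mul_cancel₀ (norm_ne_zero_iff.2 hu0)]
  · intro W hW
    let b := (stdOrthonormalBasis ℝ W).reindex (finCongr hW)
    obtain ⟨u, hu⟩ : ∃ u : Quaternion ℝ, u = (b 0 : Quaternion ℝ) := ⟨_, rfl⟩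
    obtain ⟨v, hv⟩ : ∃ v : Quaternion ℝ, v = (b 1 : Quaternion ℝ) := ⟨_, rfl⟩
    have nu : ‖u‖ = 1 := by rw [hu]; exact b.orthonormal.1 0
    have nv : ‖v‖ = 1 := by rw [hv]; exact b.orthonormal.1 1
    have huv : (v * star u).re = 0 := by
      rw [← Quaternion.inner_def, hu, hv]
      exact b.orthonormal.2 (by decide : (1 : Fin 2) ≠ 0)
    have hp : ‖v * star u‖ = 1 := by rw [norm_mul, Quaternion.norm_star, nu, nv, one_mul]
    have hq : ‖star u * v‖ = 1 := by rw [norm_mul, Quaternion.norm_star, nu, nv, one_mul]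
    have hq0 : (star u * v).re = 0 := by
      refine Eq.trans ?_ huv
      simp only [Quaternion.re_mul]; ring
    refine ⟨v * star u, star u * v, huv, hp, hq0, hq, ?_⟩
    have hle : W ≤ solF (v * star u) (star u * v) := by
      intro x hx
      have hx2 := b.sum_repr ⟨x, hx⟩
      rw [Fin.sum_univ_two] at hx2
      have hx3 := congrArg (fun w : W => (w : Quaternion ℝ)) hx2
      simp only [Submodule.coe_add, Submodule.coe_smul, ← hu, ← hv] at hx3
      rw [← hx3]
      refine Submodule.add_mem _ (Submodule.smul_mem _ _ ?_) (Submodule.smul_mem _ _ ?_)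
      · rw [mem_solF, mul_assoc, star_mul_one nu, ← mul_assoc, mul_star_one nu, one_mul, mul_one]
      · rw [mem_solF]; simp only [mul_assoc]
    have hE : W = solF (v * star u) (star u * v) :=
      Submodule.eq_of_le_of_finrank_eq hle (by rw [hW, finrank_solF huv hp hq0 hq])
    rw [K_eq, ← hE]
end

section
/- For pure unit quaternions p, q, p′, q′, one has K_p^q = K_{p′}^{q′} (as subsets of ℍ) if and only if (p′, q′) = (p, q) or (p′, q′) = (−p, −q). Thus the parameterization of great circles by pairs (p, q) is unique up to simultaneously negating both parameters. -/
open Quaternion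

lemma aux_star_mul (x : Quaternion ℝ) (h : ‖x‖ = 1) : star x * x = 1 := by
  rw [Quaternion.star_mul_self, Quaternion.normSq_eq_norm_mul_self, h]; simp

lemma aux_mul_star (x : Quaternion ℝ) (h : ‖x‖ = 1) : x * star x = 1 := by
  rw [Quaternion.self_mul_star, Quaternion.normSq_eq_norm_mul_self, h]; simp

lemma aux_star (p : Quaternion ℝ) (hp : p.re = 0) : star p = -p := by
  ext <;> simp [hp]

lemma aux_sq (p : Quaternion ℝ) (hp : p.re = 0) (h : ‖p‖ = 1) : p * p = -1 := by
  have := aux_star_mul p h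
  rw [aux_star p hp, neg_mul] at this
  rw [← this, neg_neg]

lemma aux_exists (p q : Quaternion ℝ) (hp : p.re = 0) (hpn : ‖p‖ = 1)
    (hq : q.re = 0) (hqn : ‖q‖ = 1) : ∃ y : Quaternion ℝ, y ≠ 0 ∧ p * y = y * q := by
  have hpp := aux_sq p hp hpn
  have hqq := aux_sq q hq hqn
  by_contra! hcon
  have key : ∀ a : Quaternion ℝ, p * a = - (a * q) := by
    intro a
    have h0 : a - p * a * q = 0 := by
      by_contra hne
      apply hcon _ hne
      have h1 : p * (p * a * q) = -(a * q) := by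
        rw [← mul_assoc, ← mul_assoc, hpp]; simp
      have h2 : p * a * q * q = -(p * a) := by
        rw [mul_assoc, hqq]; simp
      rw [mul_sub, sub_mul, h1, h2]; abel
    have h1 : a = p * a * q := sub_eq_zero.mp h0
    calc p * a = -(p * a * (q * q)) := by rw [hqq]; simp
      _ = -(a * q) := by rw [← mul_assoc, ← h1]
  have hqp : q = -p := by
    have := key 1
    simp at this
    rw [this, neg_neg]
  have hc : ∀ a : Quaternion ℝ, p * a = a * p := by
    intro a; rw [key a, hqp]; simp
  have gJ : ∀ a : Quaternion ℝ, (p * a).imJ = (a * p).imJ := fun a => by rw [hc a]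
  have gK : ∀ a : Quaternion ℝ, (p * a).imK = (a * p).imK := fun a => by rw [hc a]
  simp only [Quaternion.imJ_mul] at gJ
  simp only [Quaternion.imK_mul] at gK
  have hi1 := gJ ⟨0, 1, 0, 0⟩
  have hi2 := gK ⟨0, 1, 0, 0⟩
  have hj1 := gK ⟨0, 0, 1, 0⟩
  dsimp only at hi1 hi2 hj1
  have : p = 0 := by
    ext
    · exact hp
    · change p.imI = 0; linarith
    · change p.imJ = 0; linarith
    · change p.imK = 0; linarith
  simp [this] at hpn

lemma aux_nonempty (p q : Quaternion ℝ) (hp : p.re = 0) (hpn : ‖p‖ = 1)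
    (hq : q.re = 0) (hqn : ‖q‖ = 1) : ∃ x, x ∈ K p q := by
  obtain ⟨y, hy, h⟩ := aux_exists p q hp hpn hq hqn
  have hn : ‖(‖y‖⁻¹ • y)‖ = 1 := by
    rw [norm_smul, norm_inv, norm_norm, inv_mul_cancel₀ (norm_ne_zero_iff.mpr hy)]
  refine ⟨‖y‖⁻¹ • y, hn, ?_⟩
  have h2 : p * (‖y‖⁻¹ • y) = (‖y‖⁻¹ • y) * q := by
    rw [mul_smul_comm, smul_mul_assoc, h]
  rw [mul_assoc, h2, ← mul_assoc, aux_star_mul _ hn, one_mul]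

theorem statement2 (p q p' q' : Quaternion ℝ)
    (hp : p.re = 0) (hpn : ‖p‖ = 1) (hq : q.re = 0) (hqn : ‖q‖ = 1)
    (hp' : p'.re = 0) (hpn' : ‖p'‖ = 1) (hq' : q'.re = 0) (hqn' : ‖q'‖ = 1) :
    K p q = K p' q' ↔ (p' = p ∧ q' = q) ∨ (p' = -p ∧ q' = -q) := by
  constructor
  · intro hK
    obtain ⟨x, hx⟩ := aux_nonempty p q hp hpn hq hqn
    have hx' : x ∈ K p' q' := hK ▸ hx
    have hpx : p * x ∈ K p q := by
      refine ⟨by rw [norm_mul, hpn, hx.1, one_mul], ?_⟩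
      calc star (p * x) * p * (p * x) = star x * (star p * p) * p * x := by
            rw [star_mul]; noncomm_ring
        _ = q := by rw [aux_star_mul p hpn, mul_one, hx.2]
    have hpx' : p * x ∈ K p' q' := hK ▸ hpx
    have hxx := aux_mul_star x hx.1
    have e : star x * (star p * p' * p) * x = star x * p' * x := by
      rw [hx'.2, ← hpx'.2, star_mul]; noncomm_ring
    have e2 : star p * p' * p = p' := by
      have := congrArg (fun z => x * z * star x) e
      calc star p * p' * p = (x * star x) * (star p * p' * p) * (x * star x) := by
            rw [hxx]; simp
        _ = x * (star x * (star p * p' * p) * x) * star x := by simp only [mul_assoc]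
        _ = (x * star x) * p' * (x * star x) := by rw [e]; simp only [mul_assoc]
        _ = p' := by rw [hxx]; simp
    have comm : p' * p = p * p' := by
      calc p' * p = (p * star p) * p' * p := by rw [aux_mul_star p hpn, one_mul]
        _ = p * (star p * p' * p) := by simp only [mul_assoc]
        _ = p * p' := by rw [e2]
    have prod : (p' - p) * (p' + p) = 0 := by
      rw [sub_mul, mul_add, mul_add, aux_sq p hp hpn, aux_sq p' hp' hpn', comm]; abel
    rcases mul_eq_zero.mp prod with h | h
    · left
      have h := sub_eq_zero.mp h
      exact ⟨h, by rw [← hx'.2, h, hx.2]⟩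
    · right
      have h := eq_neg_of_add_eq_zero_left h
      exact ⟨h, by rw [← hx'.2, h, ← hx.2]; simp⟩
  · rintro (⟨rfl, rfl⟩ | ⟨rfl, rfl⟩)
    · rfl
    · ext x
      simp [K]
end

section
/- Let p, q be pure unit quaternions and l, r unit quaternions. Then { (conj l) * x * r : x ∈ K_p^q } = K_{(conj l) * p * l}^{(conj r) * q * r}, and { conj x : x ∈ K_p^q } = K_q^p. -/
open Quaternion

theorem unit_mul_star (a : Quaternion ℝ) (h : ‖a‖ = 1) : a * star a = 1 := by
  rw [Quaternion.self_mul_star, Quaternion.normSq_eq_norm_mul_self, h]; simp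

theorem unit_star_mul (a : Quaternion ℝ) (h : ‖a‖ = 1) : star a * a = 1 := by
  rw [Quaternion.star_mul_self, Quaternion.normSq_eq_norm_mul_self, h]; simp

theorem unit_cancel (a : Quaternion ℝ) (h : ‖a‖ = 1) (y : Quaternion ℝ) :
    a * (star a * y) = y := by
  rw [← mul_assoc, unit_mul_star a h, one_mul]

theorem unit_cancel_star (a : Quaternion ℝ) (h : ‖a‖ = 1) (y : Quaternion ℝ) :
    star a * (a * y) = y := by
  rw [← mul_assoc, unit_star_mul a h, one_mul]

theorem star_mem_K (p q x : Quaternion ℝ) (hx : x ∈ K p q) : star x ∈ K q p := by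
  obtain ⟨h1, h2⟩ := hx
  refine ⟨by rw [norm_star, h1], ?_⟩
  rw [← h2]
  simp only [star_star, mul_assoc, unit_cancel x h1, unit_mul_star x h1, mul_one]

theorem mul_mem_K (p q l r x : Quaternion ℝ) (hl : ‖l‖ = 1) (hr : ‖r‖ = 1)
    (hx : x ∈ K p q) : star l * x * r ∈ K (star l * p * l) (star r * q * r) := by
  obtain ⟨h1, h2⟩ := hx
  refine ⟨by rw [norm_mul, norm_mul, norm_star, h1, hl, hr]; norm_num, ?_⟩
  rw [← h2]
  simp only [star_mul, star_star, mul_assoc, unit_cancel l hl]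

theorem statement3 (p q l r : Quaternion ℝ)
    (hp : p.re = 0) (hpn : ‖p‖ = 1) (hq : q.re = 0) (hqn : ‖q‖ = 1)
    (hl : ‖l‖ = 1) (hr : ‖r‖ = 1) :
    (fun x : Quaternion ℝ => star l * x * r) '' K p q
        = K (star l * p * l) (star r * q * r) ∧
    (fun x : Quaternion ℝ => star x) '' K p q = K q p := by
  constructor
  · ext y
    constructor
    · rintro ⟨x, hx, rfl⟩
      exact mul_mem_K p q l r x hl hr hx
    · intro hy
      refine ⟨l * y * star r, ?_, ?_⟩
      · have h := mul_mem_K _ _ (star l) (star r) y (by rw [norm_star, hl])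
          (by rw [norm_star, hr]) hy
        simpa only [star_star, mul_assoc, unit_cancel l hl, unit_cancel r hr,
          unit_mul_star l hl, unit_mul_star r hr, mul_one] using h
      · simp only [mul_assoc, unit_cancel_star l hl, unit_star_mul r hr, mul_one]
  · ext y
    constructor
    · rintro ⟨x, hx, rfl⟩
      exact star_mem_K p q x hx
    · intro hy
      exact ⟨star y, star_mem_K q p y hy, star_star y⟩
end

section
/- Let p, q be pure unit quaternions and x ∈ K_p^q. Then for all φ, θ ∈ ℝ: exp(p(−φ)) * x * exp(qθ) = exp(p(θ−φ)) * x = x * exp(q(θ−φ)). In particular, x * exp(qθ) = exp(pθ) * x, so left multiplication by exp(pθ) and right multiplication by exp(qθ) have the same effect on K_p^q. -/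
open Quaternion

/-- `exp(pθ) = cos θ + (sin θ) p`, a unit quaternion when `p` is a pure unit quaternion. -/
noncomputable def eexp (p : Quaternion ℝ) (θ : ℝ) : Quaternion ℝ :=
  ((Real.cos θ : ℝ) : Quaternion ℝ) + (Real.sin θ) • p

theorem statement5 (p q : Quaternion ℝ)
    (hp : p.re = 0) (hpn : ‖p‖ = 1) (hq : q.re = 0) (hqn : ‖q‖ = 1)
    (x : Quaternion ℝ) (hx : x ∈ K p q) (φ θ : ℝ) :
    eexp p (-φ) * x * eexp q θ = eexp p (θ - φ) * x ∧
    eexp p (θ - φ) * x = x * eexp q (θ - φ) ∧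
    x * eexp q θ = eexp p θ * x := by
  obtain ⟨hxn, hxq⟩ := hx
  have hxx : x * star x = 1 := by
    rw [Quaternion.self_mul_star, Quaternion.normSq_eq_norm_mul_self, hxn]
    simp
  have hpp : p * p = -1 := by
    have h1 : star p = -p := Quaternion.star_eq_neg.mpr hp
    have h2 : p * star p = 1 := by
      rw [Quaternion.self_mul_star, Quaternion.normSq_eq_norm_mul_self, hpn]
      simp
    rw [h1, mul_neg] at h2
    rw [← h2, neg_neg]
  have hcomm : x * q = p * x := by
    rw [← hxq, mul_assoc, ← mul_assoc, hxx, one_mul]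
  have key : ∀ t : ℝ, x * eexp q t = eexp p t * x := by
    intro t
    unfold eexp
    rw [mul_add, add_mul, mul_smul_comm, smul_mul_assoc, hcomm,
      (Quaternion.coe_commutes (Real.cos t) x)]
  have hadd : ∀ s t : ℝ, eexp p s * eexp p t = eexp p (s + t) := by
    intro s t
    have he : ∀ u : ℝ, eexp p u = Real.cos u • (1 : Quaternion ℝ) + Real.sin u • p := by
      intro u
      unfold eexp
      rw [← Quaternion.coe_mul_eq_smul (Real.cos u) 1, mul_one]
    rw [he, he, he, Real.cos_add, Real.sin_add]
    simp only [mul_add, add_mul, smul_mul_smul_comm, one_mul, mul_one, hpp]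
    module
  refine ⟨?_, (key _).symm, key θ⟩
  rw [mul_assoc, key, ← mul_assoc, hadd]
  congr 2
  ring
end

section
/- Let p, q be pure unit quaternions. If x ∈ K_p^q and y ∈ K_p^{−q}, then ⟪x, y⟫ = 0. Hence the great circles K_p^q and K_p^{−q} are absolutely orthogonal: every vector in the plane spanned by K_p^q is orthogonal to every vector in the plane spanned by K_p^{−q}. -/
open Quaternion RealInnerProductSpace

theorem K_comm_aux (p q x : Quaternion ℝ) (hx : x ∈ K p q) : p * x = x * q := by
  obtain ⟨h1, h2⟩ := hx
  have h : x * star x = 1 := by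
    rw [Quaternion.self_mul_star, Quaternion.normSq_eq_norm_mul_self, h1]; simp
  rw [← h2, ← mul_assoc, ← mul_assoc, h, one_mul]

theorem statement7 (p q : Quaternion ℝ)
    (hp : p.re = 0) (hpn : ‖p‖ = 1) (hq : q.re = 0) (hqn : ‖q‖ = 1) :
    (∀ x ∈ K p q, ∀ y ∈ K p (-q), ⟪x, y⟫ = 0) ∧
    (∀ u ∈ Submodule.span ℝ (K p q), ∀ v ∈ Submodule.span ℝ (K p (-q)),
      ⟪u, v⟫ = 0) := by
  have key : ∀ x ∈ K p q, ∀ y ∈ K p (-q), ⟪x, y⟫ = 0 := by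
    intro x hx y hy
    have hx' := K_comm_aux p q x hx
    have hy' := K_comm_aux p (-q) y hy
    have sp : star p = -p := by rw [Quaternion.star_eq_neg]; exact hp
    have sq : star q = -q := by rw [Quaternion.star_eq_neg]; exact hq
    have hpp : p * p = -1 := by
      have h : p * star p = 1 := by
        rw [Quaternion.self_mul_star, Quaternion.normSq_eq_norm_mul_self, hpn]; simp
      rw [sp, mul_neg] at h
      rw [← h, neg_neg]
    have hy2 : q * star y = -(star y * p) := by
      have h := congrArg star hy'
      simp only [star_mul, star_neg, sp, sq, neg_mul, neg_neg, mul_neg] at h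
      exact h.symm
    rw [Quaternion.inner_def]
    have hw : p * (x * star y) = -((x * star y) * p) := by
      rw [← mul_assoc, hx', mul_assoc, hy2, mul_neg, mul_assoc]
    generalize x * star y = w at hw
    have h3 : p * (w * p) = w := by
      rw [← mul_assoc, hw, neg_mul, mul_assoc, hpp]; simp
    have h4 : (p * (w * p)).re = ((w * p) * p).re := by
      simp only [Quaternion.re_mul]; ring
    rw [h3, mul_assoc, hpp] at h4
    simp at h4
    linarith
  refine ⟨key, fun u hu v hv => ?_⟩
  induction hu using Submodule.span_induction with
  | mem x hx =>
    induction hv using Submodule.span_induction with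
    | mem y hy => exact key x hx y hy
    | zero => simp
    | add a b _ _ ha hb => rw [inner_add_right, ha, hb, add_zero]
    | smul r a _ ha => rw [inner_smul_right, ha, mul_zero]
  | zero => simp
  | add a b _ _ ha hb => rw [inner_add_left, ha, hb, add_zero]
  | smul r a _ ha => rw [real_inner_smul_left, ha, mul_zero]
end

section
/- Any two left Hopf bundles are congruent by a right rotation: for all pure unit quaternions q, q′ there exists a unit quaternion r such that for every pure unit quaternion p, { x * r : x ∈ K_p^{q} } = K_p^{q′}. -/
open Quaternion

theorem hopf_sq_of_pure (q : Quaternion ℝ) (hq : q.re = 0) (hqn : ‖q‖ = 1) : q * q = -1 := by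
  have h1 : star q = -q := by
    ext <;> simp [hq]
  have h2 : q * star q = 1 := by
    rw [Quaternion.self_mul_star, Quaternion.normSq_eq_norm_mul_self, hqn]; simp
  rw [h1, mul_neg] at h2
  rw [← h2, neg_neg]

theorem hopf_anti (q s : Quaternion ℝ) (hq : q.re = 0) (h0 : s.re = 0) (h3 : s.imK = 0)
    (h : q.imI * s.imI + q.imJ * s.imJ = 0) : q * s = s * (-q) := by
  apply Quaternion.ext
  · simp only [Quaternion.re_mul, Quaternion.re_neg, Quaternion.imI_neg, Quaternion.imJ_neg,
      Quaternion.imK_neg, hq, h0, h3]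
    linarith
  · simp only [Quaternion.imI_mul, Quaternion.re_neg, Quaternion.imI_neg, Quaternion.imJ_neg,
      Quaternion.imK_neg, hq, h0, h3]
    ring
  · simp only [Quaternion.imJ_mul, Quaternion.re_neg, Quaternion.imI_neg, Quaternion.imJ_neg,
      Quaternion.imK_neg, hq, h0, h3]
    ring
  · simp only [Quaternion.imK_mul, Quaternion.re_neg, Quaternion.imI_neg, Quaternion.imJ_neg,
      Quaternion.imK_neg, hq, h0, h3]
    ring

theorem hopf_exists_anti (q : Quaternion ℝ) (hq : q.re = 0) :
    ∃ s : Quaternion ℝ, s ≠ 0 ∧ q * s = s * (-q) := by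
  by_cases h : q.imI = 0 ∧ q.imJ = 0
  · refine ⟨⟨0, 1, 0, 0⟩, ?_, ?_⟩
    · intro h0
      have := congrArg QuaternionAlgebra.imI h0
      simp at this
    · exact hopf_anti q _ hq rfl rfl (by simp [h.1, h.2])
  · refine ⟨⟨0, -q.imJ, q.imI, 0⟩, ?_, ?_⟩
    · intro h0
      have h1 := congrArg QuaternionAlgebra.imI h0
      have h2 := congrArg QuaternionAlgebra.imJ h0
      simp at h1 h2
      exact h ⟨h2, h1⟩
    · exact hopf_anti q _ hq rfl rfl (by simp only; ring)

theorem hopf_exists_intertwiner (q q' : Quaternion ℝ)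
    (hq : q.re = 0) (hqn : ‖q‖ = 1) (hq' : q'.re = 0) (hqn' : ‖q'‖ = 1) :
    ∃ s : Quaternion ℝ, s ≠ 0 ∧ q * s = s * q' := by
  have e := hopf_sq_of_pure q hq hqn
  have e' := hopf_sq_of_pure q' hq' hqn'
  by_cases h : 1 - q * q' = 0
  · have : q' = -q := by
      have h2 : q * (1 - q * q') = q + q' := by
        rw [mul_sub, ← mul_assoc, e]; simp
      rw [h, mul_zero] at h2
      exact (neg_eq_of_add_eq_zero_right h2.symm).symm
    rw [this]
    exact hopf_exists_anti q hq
  · refine ⟨_, h, ?_⟩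
    rw [mul_sub, sub_mul, ← mul_assoc, e, mul_assoc, e']
    simp [add_comm]

theorem hopf_star_mul (x : Quaternion ℝ) (hx : ‖x‖ = 1) : star x * x = 1 := by
  rw [Quaternion.star_mul_self, Quaternion.normSq_eq_norm_mul_self, hx]; simp

theorem hopf_mul_star (x : Quaternion ℝ) (hx : ‖x‖ = 1) : x * star x = 1 := by
  rw [Quaternion.self_mul_star, Quaternion.normSq_eq_norm_mul_self, hx]; simp

theorem statement9 (q q' : Quaternion ℝ)
    (hq : q.re = 0) (hqn : ‖q‖ = 1) (hq' : q'.re = 0) (hqn' : ‖q'‖ = 1) :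
    ∃ r : Quaternion ℝ, ‖r‖ = 1 ∧
      ∀ p : Quaternion ℝ, p.re = 0 → ‖p‖ = 1 →
        (fun x : Quaternion ℝ => x * r) '' K p q = K p q' := by
  obtain ⟨s, hs, hqs⟩ := hopf_exists_intertwiner q q' hq hqn hq' hqn'
  have hn : ‖s‖ ≠ 0 := norm_ne_zero_iff.mpr hs
  obtain ⟨r, hr, hqr⟩ : ∃ r : Quaternion ℝ, ‖r‖ = 1 ∧ q * r = r * q' := by
    refine ⟨‖s‖⁻¹ • s, ?_, ?_⟩
    · rw [norm_smul, norm_inv, norm_norm, inv_mul_cancel₀ hn]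
    · rw [mul_smul_comm, smul_mul_assoc, hqs]
  have r1 := hopf_star_mul r hr
  have r2 := hopf_mul_star r hr
  refine ⟨r, hr, fun p _ _ => ?_⟩
  ext y
  constructor
  · rintro ⟨x, ⟨hx, hxq⟩, rfl⟩
    refine ⟨by simp [hx, hr], ?_⟩
    calc star (x * r) * p * (x * r) = star r * ((star x * p * x) * r) := by
          rw [star_mul]; simp only [mul_assoc]
      _ = q' := by rw [hxq, hqr, ← mul_assoc, r1, one_mul]
  · rintro ⟨hy, hyq⟩
    refine ⟨y * star r, ⟨by simp [hy, hr], ?_⟩, ?_⟩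
    · calc star (y * star r) * p * (y * star r) = r * (star y * p * y) * star r := by
            rw [star_mul, star_star]; simp only [mul_assoc]
        _ = q := by rw [hyq, ← hqr, mul_assoc, r2, mul_one]
    · simp only [mul_assoc, r1, mul_one]
end

section
/- Write a unit quaternion as x = a + b i + c j + d k. Then K_i^i = { x ∈ S³ : c = d = 0 } (the great circle in the span of 1 and i) and K_i^{−i} = { x ∈ S³ : a = b = 0 } (the great circle in the span of j and k), and the standard Clifford torus has the equation: x ∈ 𝕋_i^i if and only if a² + b² = c² + d² (equivalently a² + b² = 1/2). -/
open Quaternion RealInnerProductSpace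

/-- The geodesic (angular) distance from a point `x` of `S³` to a subset `A` of `S³`:
`d(x, A) = inf_{y ∈ A} arccos ⟪x, y⟫`. -/
noncomputable def sdist (x : Quaternion ℝ) (A : Set (Quaternion ℝ)) : ℝ :=
  sInf ((fun y => Real.arccos ⟪x, y⟫) '' A)

/-- The Clifford torus `𝕋_p^q`: the points of `S³` equidistant from the two
absolutely orthogonal great circles `K_p^q` and `K_p^{-q}`. -/
noncomputable def CT (p q : Quaternion ℝ) : Set (Quaternion ℝ) :=
  {x : Quaternion ℝ | ‖x‖ = 1 ∧ sdist x (K p q) = sdist x (K p (-q))}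

/-- The quaternion unit `i`. -/
def qi : Quaternion ℝ := ⟨0, 1, 0, 0⟩

lemma nsq (x : Quaternion ℝ) : ‖x‖ = 1 ↔ x.re^2 + x.imI^2 + x.imJ^2 + x.imK^2 = 1 := by
  rw [← Quaternion.normSq_def', Quaternion.normSq_eq_norm_mul_self]
  constructor
  · intro h; rw [h]; norm_num
  · intro h
    nlinarith [norm_nonneg x]

lemma innf (x y : Quaternion ℝ) :
    ⟪x, y⟫ = x.re * y.re + x.imI * y.imI + x.imJ * y.imJ + x.imK * y.imK := by
  rw [Quaternion.inner_def]
  simp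

lemma qi_re : qi.re = 0 := rfl
lemma qi_imI : qi.imI = 1 := rfl
lemma qi_imJ : qi.imJ = 0 := rfl
lemma qi_imK : qi.imK = 0 := rfl

lemma K1 : K qi qi = {x : Quaternion ℝ | ‖x‖ = 1 ∧ x.imJ = 0 ∧ x.imK = 0} := by
  ext x
  simp only [K, Set.mem_ofPred_eq]
  refine and_congr_right fun h => ?_
  rw [nsq] at h
  rw [Quaternion.ext_iff]
  simp [qi_re, qi_imI, qi_imJ, qi_imK]
  constructor
  · rintro ⟨-, h2, -, -⟩
    constructor <;> refine pow_eq_zero_iff (two_ne_zero) |>.1 ?_ <;> nlinarith [sq_nonneg x.imJ, sq_nonneg x.imK]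
  · rintro ⟨h1, h2⟩
    simp only [h1, h2] at h ⊢
    refine ⟨?_, ?_, ?_, ?_⟩ <;> linarith

lemma K2 : K qi (-qi) = {x : Quaternion ℝ | ‖x‖ = 1 ∧ x.re = 0 ∧ x.imI = 0} := by
  ext x
  simp only [K, Set.mem_ofPred_eq]
  refine and_congr_right fun h => ?_
  rw [nsq] at h
  rw [Quaternion.ext_iff]
  simp [qi_re, qi_imI, qi_imJ, qi_imK]
  constructor
  · rintro ⟨-, h2, -, -⟩
    constructor <;> refine pow_eq_zero_iff (two_ne_zero) |>.1 ?_ <;> nlinarith [sq_nonneg x.re, sq_nonneg x.imI]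
  · rintro ⟨h1, h2⟩
    simp only [h1, h2] at h ⊢
    refine ⟨?_, ?_, ?_, ?_⟩ <;> linarith

lemma cs2 (a b c d : ℝ) (h : c^2 + d^2 = 1) : a * c + b * d ≤ √(a^2 + b^2) := by
  apply Real.le_sqrt_of_sq_le
  have : a^2 + b^2 = (a^2+b^2) * (c^2+d^2) := by rw [h, mul_one]
  rw [this]
  nlinarith [sq_nonneg (a * d - b * c)]

lemma ex2 (a b : ℝ) : ∃ c d : ℝ, c^2 + d^2 = 1 ∧ a * c + b * d = √(a^2 + b^2) := by
  by_cases h : a^2 + b^2 = 0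
  · have ha : a = 0 := by nlinarith [sq_nonneg a, sq_nonneg b]
    have hb : b = 0 := by nlinarith [sq_nonneg a, sq_nonneg b]
    exact ⟨1, 0, by norm_num, by simp [ha, hb]⟩
  · have hs : √(a^2+b^2)^2 = a^2+b^2 := Real.sq_sqrt (by positivity)
    have hn : √(a^2+b^2) ≠ 0 := by
      intro h0; rw [h0] at hs; apply h; linarith
    refine ⟨a / √(a^2+b^2), b / √(a^2+b^2), ?_, ?_⟩
    · rw [div_pow, div_pow, hs, ← add_div, div_self h]
    · field_simp
      exact hs.symm

lemma sd1 (x : Quaternion ℝ) : sdist x (K qi qi) = Real.arccos √(x.re^2 + x.imI^2) := by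
  rw [K1]
  apply IsLeast.csInf_eq
  constructor
  · obtain ⟨c, d, h, h'⟩ := ex2 x.re x.imI
    refine ⟨⟨c, d, 0, 0⟩, ⟨(nsq _).2 (by simpa using h), rfl, rfl⟩, ?_⟩
    refine congrArg Real.arccos ((innf _ _).trans ?_)
    rw [← h']
    simp
  · rintro _ ⟨y, ⟨h, h1, h2⟩, rfl⟩
    rw [nsq] at h
    apply Real.arccos_le_arccos
    rw [innf, h1, h2]
    have := cs2 x.re x.imI y.re y.imI (by simpa [h1, h2] using h)
    linarith

lemma sd2 (x : Quaternion ℝ) : sdist x (K qi (-qi)) = Real.arccos √(x.imJ^2 + x.imK^2) := by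
  rw [K2]
  apply IsLeast.csInf_eq
  constructor
  · obtain ⟨c, d, h, h'⟩ := ex2 x.imJ x.imK
    refine ⟨⟨0, 0, c, d⟩, ⟨(nsq _).2 (by simpa using h), rfl, rfl⟩, ?_⟩
    refine congrArg Real.arccos ((innf _ _).trans ?_)
    rw [← h']
    simp
  · rintro _ ⟨y, ⟨h, h1, h2⟩, rfl⟩
    rw [nsq] at h
    apply Real.arccos_le_arccos
    rw [innf, h1, h2]
    have := cs2 x.imJ x.imK y.imJ y.imK (by simpa [h1, h2] using h)
    linarith

theorem statement13 :
    K qi qi = {x : Quaternion ℝ | ‖x‖ = 1 ∧ x.imJ = 0 ∧ x.imK = 0} ∧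
    K qi (-qi) = {x : Quaternion ℝ | ‖x‖ = 1 ∧ x.re = 0 ∧ x.imI = 0} ∧
    ∀ x : Quaternion ℝ, ‖x‖ = 1 →
      ((x ∈ CT qi qi ↔ x.re ^ 2 + x.imI ^ 2 = x.imJ ^ 2 + x.imK ^ 2) ∧
       (x ∈ CT qi qi ↔ x.re ^ 2 + x.imI ^ 2 = 1 / 2)) := by
  refine ⟨K1, K2, fun x hx => ?_⟩
  have hn := (nsq x).1 hx
  have key : x ∈ CT qi qi ↔ x.re ^ 2 + x.imI ^ 2 = x.imJ ^ 2 + x.imK ^ 2 := by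
    simp only [CT, Set.mem_ofPred_eq, hx, true_and, sd1, sd2]
    constructor
    · intro h
      have h1 : √(x.re^2 + x.imI^2) ≤ 1 := by
        refine Real.sqrt_le_iff.2 ⟨zero_le_one, ?_⟩; nlinarith [sq_nonneg x.imJ, sq_nonneg x.imK]
      have h2 : √(x.imJ^2 + x.imK^2) ≤ 1 := by
        refine Real.sqrt_le_iff.2 ⟨zero_le_one, ?_⟩; nlinarith [sq_nonneg x.re, sq_nonneg x.imI]
      have h3 := Real.arccos_injOn ⟨by linarith [Real.sqrt_nonneg (x.re^2 + x.imI^2)], h1⟩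
        ⟨by linarith [Real.sqrt_nonneg (x.imJ^2 + x.imK^2)], h2⟩ h
      exact (Real.sqrt_inj (by positivity) (by positivity)).1 h3
    · intro h; rw [h]
  refine ⟨key, key.trans ?_⟩
  constructor <;> intro h <;> linarith
end

section
/- Every isometry of the flat square torus lifts to an isometry of the plane compatible with the lattice: for every bijective isometry F : T → T there exists a bijective isometry F̂ : E → E such that π ∘ F̂ = F ∘ π. Any such F̂ maps the lattice Λ onto a translate of Λ, i.e. F̂(Λ) = F̂(0) + Λ (in particular, the linear part of F̂ maps Λ onto Λ). Moreover, F̂ is unique up to translation by a lattice vector: if F̂₁, F̂₂ are two bijective isometries of E with π ∘ F̂ᵢ = F ∘ π for i = 1, 2, then there is t ∈ Λ with F̂₂ = (translation by t) ∘ F̂₁. -/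
noncomputable section

/-- The lattice `Λ = { (2πm, 2πn) : m, n ∈ ℤ }` in the Euclidean plane. -/
def TorusLattice : AddSubgroup (EuclideanSpace ℝ (Fin 2)) :=
  AddSubgroup.closure
    {EuclideanSpace.single 0 (2 * Real.pi), EuclideanSpace.single 1 (2 * Real.pi)}

abbrev EPl := EuclideanSpace ℝ (Fin 2)

/-- nonzero lattice vectors are long -/
lemma lattice_norm {t : EPl} (ht : t ∈ TorusLattice) (h : ‖t‖ < 6) : t = 0 := by
  obtain ⟨m, n, rfl⟩ := AddSubgroup.mem_closure_pair.1 ht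
  have key : ∀ k : ℤ, |(k : ℝ) * (2 * Real.pi)| < 6 → k = 0 := by
    intro k hk
    by_contra hne
    have h1 : (1 : ℝ) ≤ |(k : ℝ)| := by exact_mod_cast Int.one_le_abs hne
    have h3 := Real.pi_gt_three
    rw [abs_mul, abs_of_pos (by positivity : (0 : ℝ) < 2 * Real.pi)] at hk
    nlinarith
  have h0 := lt_of_le_of_lt (PiLp.norm_apply_le (p := 2) _ (0 : Fin 2)) h
  have h1 := lt_of_le_of_lt (PiLp.norm_apply_le (p := 2) _ (1 : Fin 2)) h
  simp only [PiLp.add_apply, PiLp.smul_apply, PiLp.single_apply, zsmul_eq_mul,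
    Real.norm_eq_abs] at h0 h1
  have hm := key m (by simpa using h0)
  have hn := key n (by simpa using h1)
  simp [hm, hn]

lemma mk_eq_iff {x y : EPl} : QuotientAddGroup.mk' TorusLattice x = QuotientAddGroup.mk' TorusLattice y ↔
    x - y ∈ TorusLattice := by
  rw [← sub_eq_zero, ← map_sub]
  exact QuotientAddGroup.eq_zero_iff (x - y)

lemma mk_norm {x : EPl} (h : ‖x‖ ≤ 3) : ‖QuotientAddGroup.mk' TorusLattice x‖ = ‖x‖ := by
  apply le_antisymm (QuotientAddGroup.norm_mk_le_norm)
  by_contra! hlt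
  obtain ⟨y, hy, hyl⟩ := QuotientAddGroup.norm_lt_iff.1 hlt
  have hm : y - x ∈ TorusLattice := mk_eq_iff.1 hy
  have := lattice_norm hm (lt_of_le_of_lt (norm_sub_le y x) (by linarith))
  rw [sub_eq_zero] at this
  subst this
  exact lt_irrefl _ hyl

lemma local_lift (F : EPl ⧸ TorusLattice → EPl ⧸ TorusLattice) (hFi : Isometry F)
    (p q : EPl) (hq : QuotientAddGroup.mk' TorusLattice q = F (QuotientAddGroup.mk' TorusLattice p)) :
    ∃ L : EPl →ₗᵢ[ℝ] EPl, ∀ h : EPl, ‖h‖ < 1 →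
      F (QuotientAddGroup.mk' TorusLattice (p + h)) = QuotientAddGroup.mk' TorusLattice (q + L h) := by
  have ex : ∀ h : EPl, ∃ k : EPl, ‖h‖ < 1 →
      (QuotientAddGroup.mk' TorusLattice (q + k) = F (QuotientAddGroup.mk' TorusLattice (p + h)) ∧ ‖k‖ < 1) := by
    intro h
    by_cases hh : ‖h‖ < 1
    · have h1 : ‖F (QuotientAddGroup.mk' TorusLattice (p + h)) - QuotientAddGroup.mk' TorusLattice q‖ < 1 := by
        rw [hq, ← dist_eq_norm, hFi.dist_eq, dist_eq_norm, ← map_sub, add_sub_cancel_left,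
          mk_norm (by linarith)]
        exact hh
      obtain ⟨k, hk, hkl⟩ := QuotientAddGroup.norm_lt_iff.1 h1
      refine ⟨k, fun _ => ⟨?_, hkl⟩⟩
      rw [map_add]
      have hk' : QuotientAddGroup.mk' TorusLattice k = _ := hk
      rw [hk']
      abel
    · exact ⟨0, fun h' => absurd h' hh⟩
  choose f hf using ex
  have hd : ∀ a b : EPl, ‖a‖ < 1 → ‖b‖ < 1 → ‖f a - f b‖ = ‖a - b‖ := by
    intro a b ha hb
    rw [← mk_norm (x := f a - f b), ← mk_norm (x := a - b)]
    · have e1 : f a - f b = (q + f a) - (q + f b) := by abel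
      have e2 : a - b = (p + a) - (p + b) := by abel
      rw [e1, e2, map_sub, map_sub, (hf a ha).1, (hf b hb).1, ← dist_eq_norm, hFi.dist_eq,
        dist_eq_norm]
    · have := norm_sub_le a b
      linarith
    · have := norm_sub_le (f a) (f b)
      have := (hf a ha).2
      have := (hf b hb).2
      linarith
  have hf0 : f 0 = 0 := by
    have h0 := hf 0 (by simp)
    rw [add_zero, ← hq, mk_eq_iff, add_sub_cancel_left] at h0
    exact lattice_norm h0.1 (by linarith [h0.2])
  have hn : ∀ a : EPl, ‖a‖ < 1 → ‖f a‖ = ‖a‖ := by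
    intro a ha
    simpa [hf0] using hd a 0 ha (by simp)
  have hi : ∀ a b : EPl, ‖a‖ < 1 → ‖b‖ < 1 → inner ℝ (f a) (f b) = inner ℝ a b := by
    intro a b ha hb
    rw [real_inner_eq_norm_mul_self_add_norm_mul_self_sub_norm_sub_mul_self_div_two,
      real_inner_eq_norm_mul_self_add_norm_mul_self_sub_norm_sub_mul_self_div_two,
      hd a b ha hb, hn a ha, hn b hb]
  let e := EuclideanSpace.basisFun (Fin 2) ℝ
  have he : ∀ i, ‖(1/2 : ℝ) • e i‖ < 1 := by
    intro i
    rw [norm_smul, e.orthonormal.1 i]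
    norm_num
  let u : Fin 2 → EPl := fun i => (2 : ℝ) • f ((1/2 : ℝ) • e i)
  have hui : ∀ (i : Fin 2) (h : EPl), ‖h‖ < 1 → inner ℝ (u i) (f h) = inner ℝ (e i) h := by
    intro i h hh
    simp only [u]
    rw [real_inner_smul_left, hi _ _ (he i) hh, real_inner_smul_left]
    ring
  have hu : Orthonormal ℝ u := by
    rw [orthonormal_iff_ite]
    intro i j
    have : inner ℝ (u i) (u j) = inner ℝ (e i) (e j) := by
      conv_lhs => rw [show u j = (2 : ℝ) • f ((1/2 : ℝ) • e j) from rfl]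
      rw [real_inner_smul_right, hui i _ (he j), real_inner_smul_right]
      ring
    rw [this, orthonormal_iff_ite.1 e.orthonormal i j]
  have hcard : Fintype.card (Fin 2) = Module.finrank ℝ EPl := by simp
  let v : OrthonormalBasis (Fin 2) ℝ EPl :=
    OrthonormalBasis.mk hu (by
      rw [← coe_basisOfOrthonormalOfCardEqFinrank hu hcard]
      exact (Module.Basis.span_eq _).ge)
  have hv : ∀ i, v i = u i := by
    intro i
    simp [v]
  let L := e.equiv v (Equiv.refl _)
  refine ⟨L.toLinearIsometry, fun h hh => ?_⟩
  have hL : L h = f h := by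
    apply InnerProductSpace.ext_inner_left_basis v.toBasis
    intro i
    have e1 : v i = L (e i) := by simp [L]
    rw [OrthonormalBasis.coe_toBasis]
    conv_lhs => rw [e1]
    rw [L.inner_map_map, hv, hui i h hh]
  rw [← (hf h hh).1, ← hL]
  rfl

lemma global_lift (F : EPl ⧸ TorusLattice → EPl ⧸ TorusLattice) (hFi : Isometry F) :
    ∃ (q : EPl) (L : EPl →ₗᵢ[ℝ] EPl), ∀ x : EPl,
      QuotientAddGroup.mk' TorusLattice (q + L x) = F (QuotientAddGroup.mk' TorusLattice x) := by
  obtain ⟨q, hq⟩ := QuotientAddGroup.mk'_surjective TorusLattice (F (QuotientAddGroup.mk' TorusLattice 0))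
  obtain ⟨L, hL⟩ := local_lift F hFi 0 q hq
  refine ⟨q, L, ?_⟩
  let S : Set EPl := {p | ∀ h : EPl, ‖h‖ < 1 → F (QuotientAddGroup.mk' TorusLattice (p + h)) =
    QuotientAddGroup.mk' TorusLattice (q + L (p + h))}
  have step : ∀ p p' : EPl, p ∈ S → ‖p' - p‖ < 1/2 → p' ∈ S := by
    intro p p' hp hpp
    have h1 := hp (p' - p) (by linarith)
    rw [add_sub_cancel] at h1
    obtain ⟨L', hL'⟩ := local_lift F hFi p' _ h1.symm
    have small : ∀ h : EPl, ‖h‖ < 1/2 → L' h = L h := by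
      intro h hh
      have a1 := hL' h (by linarith)
      have a2 := hp (p' - p + h) (by
        have := norm_add_le (p' - p) h
        linarith)
      rw [show p + (p' - p + h) = p' + h by abel, a1, mk_eq_iff, map_add,
        show q + L p' + L' h - (q + (L p' + L h)) = L' h - L h by abel] at a2
      have := lattice_norm a2 (by
        have := norm_sub_le (L' h) (L h)
        rw [L'.norm_map, L.norm_map] at this
        linarith)
      exact sub_eq_zero.1 this
    intro h hh
    rw [hL' h hh]
    have := small ((1/2 : ℝ) • h) (by
      rw [norm_smul]
      norm_num
      linarith)
    rw [map_smul, map_smul] at this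
    rw [smul_right_injective EPl (by norm_num : (1/2 : ℝ) ≠ 0) this, L.map_add, add_assoc]
  have hS : IsClopen S := by
    constructor
    · rw [← isOpen_compl_iff, Metric.isOpen_iff]
      intro x hx
      refine ⟨1/2, by norm_num, fun y hy hyS => hx (step y x hyS ?_)⟩
      rw [← dist_eq_norm, dist_comm]
      exact hy
    · rw [Metric.isOpen_iff]
      intro x hx
      refine ⟨1/2, by norm_num, fun y hy => step x y hx ?_⟩
      rw [← dist_eq_norm]
      exact hy
  have h0 : (0 : EPl) ∈ S := by
    intro h hh
    rw [hL h hh, zero_add]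
  have hU : S = Set.univ := hS.eq_univ ⟨0, h0⟩
  intro x
  have hx : x ∈ S := hU ▸ Set.mem_univ x
  have := hx 0 (by simp)
  rw [add_zero] at this
  exact this.symm

/-- Every bijective isometry of the flat square torus `E ⧸ Λ` lifts to a bijective
isometry of the plane commuting with the projection; any such lift maps `Λ` onto a
translate of `Λ`, and the lift is unique up to translation by a lattice vector. -/
theorem statement16 (F : EuclideanSpace ℝ (Fin 2) ⧸ TorusLattice → EuclideanSpace ℝ (Fin 2) ⧸ TorusLattice)
    (hFb : Function.Bijective F) (hFi : Isometry F) :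
    (∃ Fh : EuclideanSpace ℝ (Fin 2) → EuclideanSpace ℝ (Fin 2),
      Function.Bijective Fh ∧ Isometry Fh ∧
      ∀ x, QuotientAddGroup.mk' TorusLattice (Fh x) = F (QuotientAddGroup.mk' TorusLattice x)) ∧
    (∀ Fh : EuclideanSpace ℝ (Fin 2) → EuclideanSpace ℝ (Fin 2),
      Function.Bijective Fh → Isometry Fh →
      (∀ x, QuotientAddGroup.mk' TorusLattice (Fh x) = F (QuotientAddGroup.mk' TorusLattice x)) →
      Fh '' (TorusLattice : Set (EuclideanSpace ℝ (Fin 2)))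
        = (fun t => Fh 0 + t) '' (TorusLattice : Set (EuclideanSpace ℝ (Fin 2)))) ∧
    (∀ F₁ F₂ : EuclideanSpace ℝ (Fin 2) → EuclideanSpace ℝ (Fin 2),
      Function.Bijective F₁ → Isometry F₁ →
      (∀ x, QuotientAddGroup.mk' TorusLattice (F₁ x) = F (QuotientAddGroup.mk' TorusLattice x)) →
      Function.Bijective F₂ → Isometry F₂ →
      (∀ x, QuotientAddGroup.mk' TorusLattice (F₂ x) = F (QuotientAddGroup.mk' TorusLattice x)) →
      ∃ t ∈ TorusLattice, F₂ = fun x => t + F₁ x) := by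
  refine ⟨?_, ?_, ?_⟩
  · obtain ⟨q, L, h⟩ := global_lift F hFi
    refine ⟨fun x => q + L x, ?_, ?_, h⟩
    · have hb : Function.Bijective L :=
        ⟨L.injective, LinearMap.surjective_of_injective (f := L.toLinearMap) L.injective⟩
      exact (Equiv.addLeft q).bijective.comp hb
    · exact (isometry_add_left q).comp L.isometry
  · intro Fh hb hi h
    ext z
    constructor
    · rintro ⟨t, ht, rfl⟩
      refine ⟨Fh t - Fh 0, ?_, by simp⟩
      apply mk_eq_iff.1
      rw [h, h]
      congr 1
      apply mk_eq_iff.2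
      simpa using ht
    · rintro ⟨t, ht, rfl⟩
      obtain ⟨y, hy⟩ := hb.2 (Fh 0 + t)
      refine ⟨y, ?_, hy⟩
      have : QuotientAddGroup.mk' TorusLattice y = QuotientAddGroup.mk' TorusLattice 0 := by
        apply hFb.1
        rw [← h, ← h, hy]
        apply mk_eq_iff.2
        simpa using ht
      simpa using mk_eq_iff.1 this
  · intro F₁ F₂ _ i1 h1 _ i2 h2
    have hm : ∀ x, F₂ x - F₁ x ∈ TorusLattice := fun x => mk_eq_iff.1 ((h2 x).trans (h1 x).symm)
    have hloc : IsLocallyConstant (fun x => F₂ x - F₁ x) := by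
      rw [IsLocallyConstant.iff_eventually_eq]
      intro x
      filter_upwards [Metric.ball_mem_nhds x one_pos] with y hy
      have hy' : dist y x < 1 := hy
      apply sub_eq_zero.1
      apply lattice_norm (TorusLattice.sub_mem (hm y) (hm x))
      have e1 : F₂ y - F₁ y - (F₂ x - F₁ x) = (F₂ y - F₂ x) - (F₁ y - F₁ x) := by abel
      have e2 := norm_sub_le (F₂ y - F₂ x) (F₁ y - F₁ x)
      rw [← dist_eq_norm (F₂ y), ← dist_eq_norm (F₁ y), i1.dist_eq, i2.dist_eq] at e2
      rw [e1]
      linarith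
    refine ⟨F₂ 0 - F₁ 0, hm 0, ?_⟩
    funext x
    have := hloc.apply_eq_of_preconnectedSpace x 0
    have h' : F₂ x - F₁ x = F₂ 0 - F₁ 0 := this
    rw [← h']
    abel
end
end

section
/- A two-dimensional lattice with an axis of symmetry is rectangular or rhombic: let L be an additive subgroup of the Euclidean plane ℝ² that is discrete (there is ε > 0 with L ∩ {v : ‖v‖ < ε} = {0}) and contains two ℝ-linearly independent vectors, and suppose the reflection R(x, y) := (−x, y) maps L onto L. Then there exist a > 0 and b > 0 such that either L = { (m·a, n·b) : m, n ∈ ℤ } (a rectangular lattice aligned with the axis), or L = { m·(a, b) + n·(a, −b) : m, n ∈ ℤ } (a rhombic lattice, which is the rectangular lattice with spacings 2a, 2b together with the midpoints of its rectangles). -/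
noncomputable section

/-- The vector `(a, b)` in the Euclidean plane. -/
def vec2 (a b : ℝ) : EuclideanSpace ℝ (Fin 2) :=
  EuclideanSpace.single 0 a + EuclideanSpace.single 1 b

/-- The reflection `(x, y) ↦ (−x, y)` of the Euclidean plane. -/
def reflY (v : EuclideanSpace ℝ (Fin 2)) : EuclideanSpace ℝ (Fin 2) :=
  vec2 (-(v 0)) (v 1)

theorem vec2_zero' (a b : ℝ) : vec2 a b 0 = a := by simp [vec2]

theorem vec2_one' (a b : ℝ) : vec2 a b 1 = b := by simp [vec2]

theorem eq_vec2 (v : EuclideanSpace ℝ (Fin 2)) : v = vec2 (v 0) (v 1) := by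
  ext i; fin_cases i
  · exact (vec2_zero' _ _).symm
  · exact (vec2_one' _ _).symm

theorem vec2_add (a b c d : ℝ) : vec2 a b + vec2 c d = vec2 (a + c) (b + d) := by
  ext i; fin_cases i <;> simp [vec2]

theorem vec2_zsmul (m : ℤ) (a b : ℝ) : m • vec2 a b = vec2 (m * a) (m * b) := by
  ext i; fin_cases i <;> simp [vec2]

theorem vec2_neg (a b : ℝ) : - vec2 a b = vec2 (-a) (-b) := by
  ext i; fin_cases i <;> simp [vec2]

theorem vec2_00 : vec2 0 0 = 0 := by
  ext i; fin_cases i <;> simp [vec2]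

/-- A nontrivial discrete subgroup of the reals is generated by a positive element. -/
theorem exists_pos_gen (H : AddSubgroup ℝ) (ε : ℝ) (hε : 0 < ε)
    (hd : ∀ x ∈ H, 0 < x → ε ≤ x) (x : ℝ) (hx : x ∈ H) (hx0 : x ≠ 0) :
    ∃ a > 0, ∀ y, y ∈ H ↔ ∃ m : ℤ, y = m * a := by
  obtain ⟨b, hb⟩ := AddSubgroup.cyclic_of_isolated_zero (H := H) hε (by
    rw [Set.disjoint_left]
    rintro y hy ⟨h1, h2⟩
    exact absurd (hd y hy h1) (not_le.2 h2))
  have key : ∀ y, y ∈ H ↔ ∃ m : ℤ, y = m * b := by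
    intro y
    rw [hb, AddSubgroup.mem_closure_singleton]
    simp [eq_comm]
  have hb0 : b ≠ 0 := by
    rintro rfl
    obtain ⟨m, hm⟩ := (key x).1 hx
    exact hx0 (by simpa using hm)
  refine ⟨|b|, abs_pos.2 hb0, fun y => (key y).trans ?_⟩
  rcases abs_choice b with h | h <;> rw [h]
  constructor <;> rintro ⟨m, hm⟩ <;> exact ⟨-m, by rw [hm]; push_cast; ring⟩

/-- A two-dimensional lattice with an axis of symmetry is rectangular (aligned with
the axis) or rhombic. -/
theorem statement17 (L : AddSubgroup (EuclideanSpace ℝ (Fin 2)))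
    (hdisc : ∃ ε > 0, (L : Set (EuclideanSpace ℝ (Fin 2))) ∩ {v | ‖v‖ < ε} = {0})
    (hfull : ∃ u v : EuclideanSpace ℝ (Fin 2),
      u ∈ L ∧ v ∈ L ∧ LinearIndependent ℝ ![u, v])
    (hrefl : reflY '' (L : Set (EuclideanSpace ℝ (Fin 2))) = L) :
    ∃ a > (0 : ℝ), ∃ b > (0 : ℝ),
      (L : Set (EuclideanSpace ℝ (Fin 2)))
          = {w | ∃ m n : ℤ, w = m • vec2 a 0 + n • vec2 0 b} ∨
      (L : Set (EuclideanSpace ℝ (Fin 2)))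
          = {w | ∃ m n : ℤ, w = m • vec2 a b + n • vec2 a (-b)} := by
  obtain ⟨ε, hε, hdisc⟩ := hdisc
  have hd : ∀ v ∈ L, ‖v‖ < ε → v = 0 := fun v hv h => by
    have : v ∈ (L : Set (EuclideanSpace ℝ (Fin 2))) ∩ {v | ‖v‖ < ε} := ⟨hv, h⟩
    rwa [hdisc] at this
  have hr : ∀ x y, vec2 x y ∈ L → vec2 (-x) y ∈ L := fun x y h => by
    have : reflY (vec2 x y) ∈ (L : Set (EuclideanSpace ℝ (Fin 2))) := by
      rw [← hrefl]; exact ⟨_, h, rfl⟩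
    simpa [reflY, vec2_zero', vec2_one'] using this
  have hadd : ∀ a b c d, vec2 a b ∈ L → vec2 c d ∈ L → vec2 (a + c) (b + d) ∈ L :=
    fun a b c d h1 h2 => by rw [← vec2_add]; exact L.add_mem h1 h2
  have hneg : ∀ a b, vec2 a b ∈ L → vec2 (-a) (-b) ∈ L :=
    fun a b h => by rw [← vec2_neg]; exact L.neg_mem h
  have hz : ∀ (m : ℤ) a b, vec2 a b ∈ L → vec2 (m * a) (m * b) ∈ L :=
    fun m a b h => by rw [← vec2_zsmul]; exact L.zsmul_mem h m
  have h2x : ∀ x y, vec2 x y ∈ L → vec2 (2 * x) 0 ∈ L := fun x y h => by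
    have := hadd _ _ _ _ h (hneg _ _ (hr _ _ h))
    convert this using 2 <;> ring
  have h2y : ∀ x y, vec2 x y ∈ L → vec2 0 (2 * y) ∈ L := fun x y h => by
    have := hadd _ _ _ _ h (hr _ _ h)
    convert this using 2 <;> ring
  let A : AddSubgroup ℝ :=
    { carrier := {x | vec2 x 0 ∈ L}
      zero_mem' := by simp [vec2_00]
      add_mem' := fun {x y} hx hy => by simpa using hadd _ _ _ _ hx hy
      neg_mem' := fun {x} hx => by simpa using hneg _ _ hx }
  let B : AddSubgroup ℝ :=
    { carrier := {x | vec2 0 x ∈ L}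
      zero_mem' := by simp [vec2_00]
      add_mem' := fun {x y} hx hy => by simpa using hadd _ _ _ _ hx hy
      neg_mem' := fun {x} hx => by simpa using hneg _ _ hx }
  obtain ⟨u, v, hu, hv, hli⟩ := hfull
  rw [LinearIndependent.pair_iff] at hli
  have hux := eq_vec2 u
  have hvx := eq_vec2 v
  have hu' := hu
  have hv' := hv
  rw [hux] at hu'
  rw [hvx] at hv'
  have hdet : u 0 * v 1 - u 1 * v 0 ≠ 0 := by
    intro h
    have e1 := hli (v 1) (-(u 1)) (by
      ext i; fin_cases i
      · simp; linarith
      · simp; ring)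
    have e2 := hli (v 0) (-(u 0)) (by
      ext i; fin_cases i
      · simp; ring
      · simp; linarith)
    have := hli 1 0 (by
      ext i; fin_cases i
      · simp; linarith [e2.2]
      · simp; linarith [e1.2])
    exact one_ne_zero this.1
  have hA : ∃ x ∈ A, x ≠ 0 := by
    by_contra! hc
    have h1 : 2 * u 0 = 0 := hc _ (h2x _ _ hu')
    have h2 : 2 * v 0 = 0 := hc _ (h2x _ _ hv')
    apply hdet
    rw [show u 0 = 0 by linarith, show v 0 = 0 by linarith]; ring
  have hB : ∃ x ∈ B, x ≠ 0 := by
    by_contra! hc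
    have h1 : 2 * u 1 = 0 := hc _ (h2y _ _ hu')
    have h2 : 2 * v 1 = 0 := hc _ (h2y _ _ hv')
    apply hdet
    rw [show u 1 = 0 by linarith, show v 1 = 0 by linarith]; ring
  obtain ⟨x, hx, hx0⟩ := hA
  obtain ⟨y, hy, hy0⟩ := hB
  obtain ⟨a, ha, hA⟩ := exists_pos_gen A ε hε (fun x hx h0 => by
    by_contra! hlt
    have := hd _ hx (by simpa [EuclideanSpace.norm_eq, vec2_zero', vec2_one', abs_of_pos h0, Real.sqrt_sq h0.le] using hlt)
    have h := vec2_zero' x 0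
    rw [this] at h
    simp at h; linarith) x hx hx0
  obtain ⟨b, hb, hB⟩ := exists_pos_gen B ε hε (fun x hx h0 => by
    by_contra! hlt
    have := hd _ hx (by simpa [EuclideanSpace.norm_eq, vec2_zero', vec2_one', abs_of_pos h0, Real.sqrt_sq h0.le] using hlt)
    have h := vec2_one' 0 x
    rw [this] at h
    simp at h; linarith) y hy hy0
  have hA' : ∀ x, vec2 x 0 ∈ L ↔ ∃ m : ℤ, x = m * a := hA
  have hB' : ∀ x, vec2 0 x ∈ L ↔ ∃ m : ℤ, x = m * b := hB
  have hmem : ∀ x y, vec2 x y ∈ L → ∃ p q : ℤ,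
      (x = p * a ∧ y = q * b) ∨ (x = p * a + a / 2 ∧ y = q * b + b / 2) := by
    intro x y h
    obtain ⟨m, hm⟩ := (hA' _).1 (h2x _ _ h)
    obtain ⟨n, hn⟩ := (hB' _).1 (h2y _ _ h)
    rcases Int.even_or_odd' m with ⟨p, rfl | rfl⟩ <;>
      rcases Int.even_or_odd' n with ⟨q, rfl | rfl⟩ <;> push_cast at hm hn
    · exact ⟨p, q, Or.inl ⟨by linarith, by linarith⟩⟩
    · exfalso
      have h1 := hadd _ _ _ _ h ((hA' _).2 ⟨-p, rfl⟩)
      rw [show x + ((-p : ℤ) : ℝ) * a = 0 by push_cast; linarith, add_zero] at h1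
      obtain ⟨k, hk⟩ := (hB' _).1 h1
      have h3 : ((2 * q + 1 : ℤ) : ℝ) * b = ((2 * k : ℤ) : ℝ) * b := by push_cast; linarith
      have h4 := mul_right_cancel₀ hb.ne' h3
      have h5 : 2 * q + 1 = 2 * k := by exact_mod_cast h4
      omega
    · exfalso
      have h1 := hadd _ _ _ _ h ((hB' _).2 ⟨-q, rfl⟩)
      rw [show y + ((-q : ℤ) : ℝ) * b = 0 by push_cast; linarith, add_zero] at h1
      obtain ⟨k, hk⟩ := (hA' _).1 h1
      have h3 : ((2 * p + 1 : ℤ) : ℝ) * a = ((2 * k : ℤ) : ℝ) * a := by push_cast; linarith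
      have h4 := mul_right_cancel₀ ha.ne' h3
      have h5 : 2 * p + 1 = 2 * k := by exact_mod_cast h4
      omega
    · exact ⟨p, q, Or.inr ⟨by linarith, by linarith⟩⟩
  have hrect : ∀ p q : ℤ, vec2 (p * a) (q * b) ∈ L := fun p q => by
    simpa using hadd _ _ _ _ ((hA' _).2 ⟨p, rfl⟩) ((hB' _).2 ⟨q, rfl⟩)
  by_cases hc : vec2 (a / 2) (b / 2) ∈ L
  · refine ⟨a / 2, by positivity, b / 2, by positivity, Or.inr ?_⟩
    ext w
    rw [SetLike.mem_coe, Set.mem_ofPred_eq]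
    constructor
    · intro hw
      rw [eq_vec2 w] at hw ⊢
      obtain ⟨p, q, ⟨h1, h2⟩ | ⟨h1, h2⟩⟩ := hmem _ _ hw
      · refine ⟨p + q, p - q, ?_⟩
        rw [vec2_zsmul, vec2_zsmul, vec2_add, h1, h2]
        push_cast
        congr 1 <;> ring
      · refine ⟨p + q + 1, p - q, ?_⟩
        rw [vec2_zsmul, vec2_zsmul, vec2_add, h1, h2]
        push_cast
        congr 1 <;> ring
    · rintro ⟨m, n, rfl⟩
      refine L.add_mem (L.zsmul_mem hc m) (L.zsmul_mem ?_ n)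
      simpa using hneg _ _ (hr _ _ hc)
  · refine ⟨a, ha, b, hb, Or.inl ?_⟩
    ext w
    rw [SetLike.mem_coe, Set.mem_ofPred_eq]
    constructor
    · intro hw
      rw [eq_vec2 w] at hw ⊢
      obtain ⟨p, q, ⟨h1, h2⟩ | ⟨h1, h2⟩⟩ := hmem _ _ hw
      · refine ⟨p, q, ?_⟩
        rw [vec2_zsmul, vec2_zsmul, vec2_add, h1, h2]
        congr 1 <;> ring
      · exfalso
        apply hc
        have := hadd _ _ _ _ hw (hrect (-p) (-q))
        rw [h1, h2] at this
        convert this using 2 <;> push_cast <;> ring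
    · rintro ⟨m, n, rfl⟩
      rw [vec2_zsmul, vec2_zsmul, vec2_add]
      simpa using hrect m n
end
end
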